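/- Assume the interpolatory quadrature at the nodes themselves is exact to degree 2M−1, i.e. Σ_{m=0}^{M} w_m p(ξᵐ) = ∫₀¹ p(ξ) dξ for every polynomial p of degree ≤ 2M−1 (as holds for Gauss–Lobatto and Gauss–Legendre nodes), and assume B is invertible. Let A = B⁻¹·diag(w₀,…,w_M), b = (w₀,…,w_M), c = β. Then the Runge–Kutta simplifying condition D(M) holds: for every z with 1 ≤ z ≤ M and every j ∈ {0,…,M}, Σ_{i=0}^{M} w_i (ξⁱ)^{z−1} A_{ij} = (w_j/z)·(1 − (ξʲ)^{z}). Equivalently, for every such z and every ℓ: Σ_{m=0}^{M} B_{mℓ} (1 − (ξᵐ)^{z}) = z·w_ℓ·(ξˡ)^{z−1}. -/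

import Mathlib

/-!
The matrix `B` represents the bilinear form `⟨p, q⟩ = p(1) q(1) - ∫₀¹ p' q` in the Lagrange basis.
Interpolation reproduces `p` when `deg p ≤ M`, so `∑ₘ p(ξᵐ) Bₘₗ = ⟨p, ψˡ⟩`. If `p(1) = 0`, only
the integral of `p' ψˡ` remains; the quadrature is exact on it and collapses to
`-wₗ p'(ξˡ)`, because `ψˡ` vanishes at the other nodes. Taking `p = 1 - Xᶻ` gives the second
identity, and multiplying it by `B⁻¹ diag(w)` gives the first.
-/

section

open Polynomial Matrix

variable {R K ι : Type*} [CommRing R] [Field K] [Fintype ι]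

/-- The bilinear form `p(a) q(a) - I(p' q)` of the ADER weak formulation. The functional `I` stands
for integration over the time interval and `a` for its right end point. -/
noncomputable def aderForm (I : R[X] →ₗ[R] R) (a : R) : LinearMap.BilinForm R R[X] :=
  (LinearMap.mul R R).compl₁₂ (leval a) (leval a) -
    (LinearMap.mul R R[X]).compr₂ I ∘ₗ derivative

theorem aderForm_apply (I : R[X] →ₗ[R] R) (a : R) (p q : R[X]) :
    aderForm I a p q = p.eval a * q.eval a - I (derivative p * q) :=
  rfl

/-- The ADER matrix `B`: the Gram matrix of `aderForm` in the Lagrange basis of the nodes `ξ`. -/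
noncomputable def aderMatrix [DecidableEq ι] (I : K[X] →ₗ[K] K) (a : K) (ξ : ι → K) :
    Matrix ι ι K :=
  of fun l m => aderForm I a (Lagrange.basis Finset.univ ξ l) (Lagrange.basis Finset.univ ξ m)

/-- The quadrature rule with nodes `ξ` and weights `w` reproduces the functional `I` on all
polynomials of degree at most `n`. -/
def IsExactQuadrature (I : R[X] →ₗ[R] R) (ξ w : ι → R) (n : ℕ) : Prop :=
  ∀ p : R[X], p.natDegree ≤ n → ∑ i, w i * p.eval (ξ i) = I p

variable [DecidableEq ι] {I : K[X] →ₗ[K] K} {ξ w : ι → K} {n : ℕ}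

theorem eq_lagrangeBasis_of_eval_eq (hξ : Function.Injective ξ) {ψ : ι → K[X]}
    (hdeg : ∀ l, (ψ l).degree < Fintype.card ι)
    (heval : ∀ l m, (ψ l).eval (ξ m) = if l = m then 1 else 0) :
    ψ = Lagrange.basis Finset.univ ξ := by
  funext l
  refine eq_of_degrees_lt_of_eval_index_eq Finset.univ hξ.injOn (hdeg l) ?_ fun m _ => ?_
  · rw [Lagrange.degree_basis hξ.injOn (Finset.mem_univ l), Nat.cast_lt]
    exact Nat.sub_lt (Finset.card_pos.2 ⟨l, Finset.mem_univ l⟩) one_pos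
  · rw [heval]
    split_ifs with hlm
    · rw [← hlm, Lagrange.eval_basis_self hξ.injOn (Finset.mem_univ l)]
    · rw [Lagrange.eval_basis_of_ne hlm (Finset.mem_univ m)]

theorem sum_eval_smul_lagrangeBasis (hξ : Function.Injective ξ) {q : K[X]}
    (hq : q.degree < Fintype.card ι) :
    ∑ m, q.eval (ξ m) • Lagrange.basis Finset.univ ξ m = q := by
  simpa only [Lagrange.interpolate_apply, smul_eq_C_mul] using
    (Lagrange.eq_interpolate (s := Finset.univ) hξ.injOn hq).symm

theorem vecMul_aderMatrix_eq_aderForm (hξ : Function.Injective ξ) (a : K) {q : K[X]}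
    (hq : q.degree < Fintype.card ι) (l : ι) :
    ((fun m => q.eval (ξ m)) ᵥ* aderMatrix I a ξ) l =
      aderForm I a q (Lagrange.basis Finset.univ ξ l) := by
  conv_rhs => rw [← sum_eval_smul_lagrangeBasis hξ hq]
  simp only [vecMul, dotProduct, aderMatrix, of_apply, map_sum, map_smul, LinearMap.sum_apply,
    LinearMap.smul_apply, smul_eq_mul]

theorem IsExactQuadrature.apply_mul_lagrangeBasis (hI : IsExactQuadrature I ξ w n)
    (hξ : Function.Injective ξ) {p : K[X]} (hp : p.natDegree + (Fintype.card ι - 1) ≤ n) (l : ι) :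
    I (p * Lagrange.basis Finset.univ ξ l) = w l * p.eval (ξ l) := by
  have hdeg : (p * Lagrange.basis Finset.univ ξ l).natDegree ≤ n := by
    refine natDegree_mul_le.trans ?_
    rwa [Lagrange.natDegree_basis hξ.injOn (Finset.mem_univ l)]
  rw [← hI _ hdeg, Fintype.sum_eq_single l fun i hi => ?_, eval_mul,
    Lagrange.eval_basis_self hξ.injOn (Finset.mem_univ l), mul_one]
  rw [eval_mul, Lagrange.eval_basis_of_ne hi.symm (Finset.mem_univ i), mul_zero, mul_zero]

theorem IsExactQuadrature.vecMul_aderMatrix (hI : IsExactQuadrature I ξ w n)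
    (hξ : Function.Injective ξ) (a : K) {q : K[X]} (hq : q.degree < Fintype.card ι)
    (hq' : (derivative q).natDegree + (Fintype.card ι - 1) ≤ n) (l : ι) :
    ((fun m => q.eval (ξ m)) ᵥ* aderMatrix I a ξ) l =
      q.eval a * (Lagrange.basis Finset.univ ξ l).eval a - w l * (derivative q).eval (ξ l) := by
  rw [vecMul_aderMatrix_eq_aderForm hξ a hq, aderForm_apply, hI.apply_mul_lagrangeBasis hξ hq']

theorem IsExactQuadrature.vecMul_aderMatrix_pow (hI : IsExactQuadrature I ξ w n)
    (hξ : Function.Injective ξ) (a : K) {z : ℕ} (hz : z < Fintype.card ι)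
    (hzn : z - 1 + (Fintype.card ι - 1) ≤ n) :
    (fun m => a ^ z - ξ m ^ z) ᵥ* aderMatrix I a ξ = fun l => z * w l * ξ l ^ (z - 1) := by
  funext l
  have hdeg : (C (a ^ z) - X ^ z : K[X]).natDegree ≤ z := by compute_degree
  have hlt : (C (a ^ z) - X ^ z : K[X]).degree < Fintype.card ι :=
    (natDegree_le_iff_degree_le.1 hdeg).trans_lt (Nat.cast_lt.2 hz)
  have hderiv : (derivative (C (a ^ z) - X ^ z : K[X])).natDegree + (Fintype.card ι - 1) ≤ n := by
    grw [natDegree_derivative_le, hdeg, hzn]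
  have hvec := hI.vecMul_aderMatrix hξ a hlt hderiv l
  simp only [eval_sub, eval_C, eval_pow, eval_X, sub_self, zero_mul, derivative_sub, derivative_C,
    derivative_X_pow, eval_mul, eval_neg, zero_sub, mul_neg, neg_neg] at hvec
  rw [hvec]
  ring

theorem vecMul_inv_mul_diagonal {B : Matrix ι ι R} (hB : IsUnit B.det) {u v : ι → R}
    (huv : u ᵥ* B = v) (w : ι → R) (j : ι) : (v ᵥ* (B⁻¹ * diagonal w)) j = u j * w j := by
  rw [← huv, vecMul_vecMul, mul_nonsing_inv_cancel_left _ _ hB, vecMul_diagonal]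

/-- A quadrature with `M + 1` nodes that is exact to degree `M + η - 1`, `η ≤ M`, yields `D(η)`. -/
theorem ader_simplifying_condition_D_general [CharZero K] {M η : ℕ}
    (hι : Fintype.card ι = M + 1) (hη : η ≤ M) (hξ : Function.Injective ξ) (a : K)
    (hI : IsExactQuadrature I ξ w (M + η - 1)) (hB : IsUnit (aderMatrix I a ξ).det) :
    (∀ z : ℕ, 1 ≤ z → z ≤ η → ∀ j,
      ∑ i, w i * ξ i ^ (z - 1) * ((aderMatrix I a ξ)⁻¹ * diagonal w) i j
        = (w j / (z : K)) * (a ^ z - ξ j ^ z)) ∧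
    (∀ z : ℕ, 1 ≤ z → z ≤ η → ∀ l,
      ∑ m, aderMatrix I a ξ m l * (a ^ z - ξ m ^ z) = (z : K) * w l * ξ l ^ (z - 1)) := by
  have hvec (z : ℕ) (hz : 1 ≤ z) (hzη : z ≤ η) :=
    hI.vecMul_aderMatrix_pow hξ a (z := z) (by omega) (by omega)
  refine ⟨fun z hz hzη j => ?_, fun z hz hzη l => ?_⟩
  · have hz0 : (z : K) ≠ 0 := Nat.cast_ne_zero.2 (by omega)
    have hD := vecMul_inv_mul_diagonal hB (hvec z hz hzη) w j
    simp only [vecMul, dotProduct, mul_assoc, ← Finset.mul_sum] at hD ⊢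
    rw [div_mul_eq_mul_div, eq_div_iff hz0, mul_comm, hD, mul_comm]
  · simpa only [vecMul, dotProduct, mul_comm (aderMatrix I a ξ _ l)] using
      congrFun (hvec z hz hzη) l

/-- The functional `p ↦ ∫₀¹ p`, the instance of `I` for the ADER scheme on the unit interval. -/
noncomputable def unitIntervalIntegral : ℝ[X] →ₗ[ℝ] ℝ where
  toFun p := ∫ x in (0 : ℝ)..1, p.eval x
  map_add' p q := by
    simpa only [eval_add] using intervalIntegral.integral_add
      (p.continuous.intervalIntegrable 0 1) (q.continuous.intervalIntegrable 0 1)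
  map_smul' c p := by
    simp only [eval_smul, RingHom.id_apply, intervalIntegral.integral_smul]

theorem aderMatrix_unitIntervalIntegral_apply (ξ : ι → ℝ) (l m : ι) :
    aderMatrix unitIntervalIntegral 1 ξ l m =
      (Lagrange.basis Finset.univ ξ l).eval 1 * (Lagrange.basis Finset.univ ξ m).eval 1 -
        ∫ x in (0 : ℝ)..1, (derivative (Lagrange.basis Finset.univ ξ l)).eval x *
          (Lagrange.basis Finset.univ ξ m).eval x := by
  simp only [aderMatrix, of_apply, aderForm_apply, unitIntervalIntegral, LinearMap.coe_mk,
    AddHom.coe_mk, eval_mul]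

end

/-- Runge–Kutta simplifying condition D(M) for the ADER scheme with nodal quadrature
exact to degree 2M−1 (e.g. Gauss–Lobatto or Gauss–Legendre nodes). -/
theorem ader_simplifying_condition_D
    (M : ℕ) (hM : 1 ≤ M)
    (ξ : Fin (M + 1) → ℝ)
    (hξ01 : ∀ m, ξ m ∈ Set.Icc (0 : ℝ) 1)
    (hξmono : StrictMono ξ)
    (ψ : Fin (M + 1) → Polynomial ℝ)
    (hψdeg : ∀ l, (ψ l).natDegree ≤ M)
    (hψeval : ∀ l m, (ψ l).eval (ξ m) = if l = m then 1 else 0)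
    (Bmat Lam : Matrix (Fin (M + 1)) (Fin (M + 1)) ℝ)
    (hB : ∀ l m, Bmat l m = (ψ l).eval 1 * (ψ m).eval 1 -
        ∫ x in (0 : ℝ)..1, (ψ l).derivative.eval x * (ψ m).eval x)
    (hLam : ∀ l m, Lam l m = ∫ x in (0 : ℝ)..1, (ψ l).eval x * (ψ m).eval x)
    (w : Fin (M + 1) → ℝ)
    (hw : ∀ m, w m = ∫ x in (0 : ℝ)..1, (ψ m).eval x)
    (hquad : ∀ p : Polynomial ℝ, p.natDegree ≤ 2 * M - 1 →
      ∑ m, w m * p.eval (ξ m) = ∫ x in (0 : ℝ)..1, p.eval x)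
    (hBinv : IsUnit Bmat.det) :
    (∀ z : ℕ, 1 ≤ z → z ≤ M → ∀ j,
      ∑ i, w i * ξ i ^ (z - 1) * (Bmat⁻¹ * Matrix.diagonal w) i j
        = (w j / (z : ℝ)) * (1 - ξ j ^ z)) ∧
    (∀ z : ℕ, 1 ≤ z → z ≤ M → ∀ l,
      ∑ m, Bmat m l * (1 - ξ m ^ z) = (z : ℝ) * w l * ξ l ^ (z - 1)) := by
  have hψlt (l) : (ψ l).degree < Fintype.card (Fin (M + 1)) := by
    rw [Fintype.card_fin]
    exact (Polynomial.degree_le_of_natDegree_le (hψdeg l)).trans_lt (Nat.cast_lt.2 M.lt_succ_self)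
  obtain rfl := eq_lagrangeBasis_of_eval_eq hξmono.injective hψlt hψeval
  obtain rfl : Bmat = aderMatrix unitIntervalIntegral 1 ξ := by
    ext l m
    rw [hB, aderMatrix_unitIntervalIntegral_apply]
  rw [two_mul] at hquad
  simpa only [one_pow] using ader_simplifying_condition_D_general (Fintype.card_fin _) le_rfl
    hξmono.injective 1 (I := unitIntervalIntegral) hquad hBinv
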